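/- arXiv:2008.10048 — 2 statements merged into one kernel-verified Lean document; each statement's English description precedes it below -/
import Mathlib

section
/- Special case of LQPQM with zero offset, second alternative (Theorem 2, case 2): if 0 ≤ z < λ_max, where λ_max is the largest eigenvalue of U, and σ ∈ ℂ^d is a unit-norm eigenvector of U for λ_max, then y* = sqrt((λ_max − z)/λ_max) · σ satisfies y*^H U y* + z = λ_max, F₀(y*) = (λ_max − z)/λ_max − log λ_max, and F₀(y) ≥ F₀(y*) for every y ∈ ℂ^d with y^H U y + z > 0. -/
open Matrix ComplexOrder

/-! Write `t = yᴴ U y + z`. The Rayleigh bound `yᴴ U y ≤ λ ‖y‖²` gives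
`F₀ y ≥ (t - z) / λ - log t`, and the right-hand side is convex in `t > 0` with minimum at `t = λ`.
The vector `y*` attains both bounds: it is an eigenvector for `λ`, and its norm is chosen so that
`t = λ`. -/

theorem log_le_log_add_div_sub_one {s t : ℝ} (hs : 0 < s) (ht : 0 < t) :
    Real.log t ≤ Real.log s + (t / s - 1) := by
  have tangent := Real.log_le_sub_one_of_pos (div_pos ht hs)
  rw [Real.log_div ht.ne' hs.ne'] at tangent
  linarith

section RCLike

variable {𝕜 n : Type*} [RCLike 𝕜] [Fintype n] {U : Matrix n n 𝕜}

theorem re_dotProduct_ofReal_smul_self (r : ℝ) (x : n → 𝕜) :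
    RCLike.re (star ((r : 𝕜) • x) ⬝ᵥ ((r : 𝕜) • x)) = r ^ 2 * RCLike.re (star x ⬝ᵥ x) := by
  rw [star_smul, smul_dotProduct, dotProduct_smul, RCLike.star_def, RCLike.conj_ofReal,
    smul_eq_mul, smul_eq_mul, RCLike.re_ofReal_mul, RCLike.re_ofReal_mul, ← mul_assoc, sq]

theorem re_dotProduct_mulVec_of_eigenvector {lam : ℝ} {x : n → 𝕜}
    (hx : U *ᵥ x = (lam : 𝕜) • x) :
    RCLike.re (star x ⬝ᵥ (U *ᵥ x)) = lam * RCLike.re (star x ⬝ᵥ x) := by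
  rw [hx, dotProduct_smul, smul_eq_mul, RCLike.re_ofReal_mul]

theorem exists_mulVec_eq_smul_of_mem_spectrum_real [DecidableEq n] (hU : U.IsHermitian) {μ : ℝ}
    (hμ : μ ∈ spectrum ℝ U) : ∃ x : n → 𝕜, x ≠ 0 ∧ U *ᵥ x = (μ : 𝕜) • x := by
  rw [hU.spectrum_real_eq_range_eigenvalues] at hμ
  obtain ⟨i, rfl⟩ := hμ
  refine ⟨(hU.eigenvectorBasis i).ofLp, ?_, ?_⟩
  · exact (WithLp.ofLp_eq_zero 2).not.mpr (hU.eigenvectorBasis.orthonormal.ne_zero i)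
  · rw [hU.mulVec_eigenvectorBasis, RCLike.real_smul_eq_coe_smul (K := 𝕜)]

open scoped MatrixOrder in
theorem re_dotProduct_mulVec_le_of_spectrum_le [DecidableEq n] (hU : U.IsHermitian) {lam : ℝ}
    (hlam : ∀ μ ∈ spectrum ℝ U, μ ≤ lam) (y : n → 𝕜) :
    RCLike.re (star y ⬝ᵥ (U *ᵥ y)) ≤ lam * RCLike.re (star y ⬝ᵥ y) := by
  have loewner_le : U ≤ algebraMap ℝ (Matrix n n 𝕜) lam :=
    le_algebraMap_of_spectrum_le hlam hU.isSelfAdjoint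
  have quadratic_nonneg := (Matrix.le_iff.mp loewner_le).re_dotProduct_nonneg y
  rwa [Algebra.algebraMap_eq_smul_one, sub_mulVec, smul_mulVec, one_mulVec, dotProduct_sub,
    dotProduct_smul, map_sub, RCLike.smul_re, sub_nonneg] at quadratic_nonneg

theorem re_dotProduct_mulVec_le_of_mem_upperBounds_eigenvalues (hU : U.IsHermitian) {lam : ℝ}
    (hlam : lam ∈ upperBounds {μ : ℝ | ∃ x : n → 𝕜, x ≠ 0 ∧ U *ᵥ x = (μ : 𝕜) • x}) (y : n → 𝕜) :
    RCLike.re (star y ⬝ᵥ (U *ᵥ y)) ≤ lam * RCLike.re (star y ⬝ᵥ y) := by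
  classical
  exact re_dotProduct_mulVec_le_of_spectrum_le hU
    (fun _ hμ => hlam (exists_mulVec_eq_smul_of_mem_spectrum_real hU hμ)) y

/-- The zero-offset LQPQM objective `F₀ y = ‖y‖² - log (yᴴ U y + z)`, with both forms read off as
real parts. It is meaningful only where `yᴴ U y + z > 0`, as `Real.log` is even and vanishes at
`0`. -/
noncomputable def lqpqmObjective (U : Matrix n n 𝕜) (z : ℝ) (y : n → 𝕜) : ℝ :=
  RCLike.re (star y ⬝ᵥ y) - Real.log (RCLike.re (star y ⬝ᵥ (U *ᵥ y)) + z)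

theorem sub_div_sub_log_le_lqpqmObjective {z lam : ℝ} (hlam : 0 < lam) {y : n → 𝕜}
    (rayleigh_le : RCLike.re (star y ⬝ᵥ (U *ᵥ y)) ≤ lam * RCLike.re (star y ⬝ᵥ y))
    (hy : 0 < RCLike.re (star y ⬝ᵥ (U *ᵥ y)) + z) :
    (lam - z) / lam - Real.log lam ≤ lqpqmObjective U z y := by
  unfold lqpqmObjective
  set q := RCLike.re (star y ⬝ᵥ (U *ᵥ y))
  have log_le : Real.log (q + z) ≤ Real.log lam + ((q + z) / lam - 1) :=
    log_le_log_add_div_sub_one hlam hy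
  calc (lam - z) / lam - Real.log lam
      = q / lam - (Real.log lam + ((q + z) / lam - 1)) := by field_simp; ring
    _ ≤ RCLike.re (star y ⬝ᵥ y) - Real.log (q + z) :=
        sub_le_sub ((div_le_iff₀' hlam).mpr rayleigh_le) log_le

theorem lqpqm_zero_offset_case2_general (hU : U.IsHermitian) {z lam : ℝ} (hlam : 0 < lam)
    (hz : z ≤ lam)
    (hmax : lam ∈ upperBounds {μ : ℝ | ∃ x : n → 𝕜, x ≠ 0 ∧ U *ᵥ x = (μ : 𝕜) • x})
    {σ : n → 𝕜} (hσ_eig : U *ᵥ σ = (lam : 𝕜) • σ) (hσ_norm : star σ ⬝ᵥ σ = 1) :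
    letI ystar : n → 𝕜 := (Real.sqrt ((lam - z) / lam) : 𝕜) • σ
    RCLike.re (star ystar ⬝ᵥ (U *ᵥ ystar)) + z = lam ∧
    lqpqmObjective U z ystar = (lam - z) / lam - Real.log lam ∧
    ∀ y : n → 𝕜, 0 < RCLike.re (star y ⬝ᵥ (U *ᵥ y)) + z →
      lqpqmObjective U z ystar ≤ lqpqmObjective U z y := by
  set ystar : n → 𝕜 := (Real.sqrt ((lam - z) / lam) : 𝕜) • σ
  have normSq_ystar : RCLike.re (star ystar ⬝ᵥ ystar) = (lam - z) / lam := by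
    rw [re_dotProduct_ofReal_smul_self, hσ_norm, RCLike.one_re, mul_one,
      Real.sq_sqrt (div_nonneg (sub_nonneg.mpr hz) hlam.le)]
  have ystar_eig : U *ᵥ ystar = (lam : 𝕜) • ystar := by rw [mulVec_smul, hσ_eig, smul_comm]
  have quadratic_ystar : RCLike.re (star ystar ⬝ᵥ (U *ᵥ ystar)) + z = lam := by
    rw [re_dotProduct_mulVec_of_eigenvector ystar_eig, normSq_ystar, mul_div_cancel₀ _ hlam.ne',
      sub_add_cancel]
  have objective_ystar : lqpqmObjective U z ystar = (lam - z) / lam - Real.log lam := by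
    rw [lqpqmObjective, normSq_ystar, quadratic_ystar]
  refine ⟨quadratic_ystar, objective_ystar, fun y hy => objective_ystar.trans_le ?_⟩
  exact sub_div_sub_log_le_lqpqmObjective hlam
    (re_dotProduct_mulVec_le_of_mem_upperBounds_eigenvalues hU hmax y) hy

end RCLike

/-- Special case of LQPQM with zero offset, second alternative (Theorem 2, case 2):
if `0 ≤ z < λ_max`, the largest eigenvalue of `U`, and `σ` is a unit-norm eigenvector of
`U` for `λ_max`, then `y* = sqrt((λ_max - z)/λ_max) σ` satisfies
`y*^H U y* + z = λ_max`, `F₀(y*) = (λ_max - z)/λ_max - log λ_max`, and `F₀(y) ≥ F₀(y*)`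
for every `y` with `y^H U y + z > 0`, where `F₀(y) = ‖y‖² - log(y^H U y + z)`. -/
theorem lqpqm_zero_offset_case2 {d : ℕ} (hd : 1 ≤ d)
    (U : Matrix (Fin d) (Fin d) ℂ) (hU : U.PosSemidef)
    (z : ℝ) (hz : 0 ≤ z)
    (lammax : ℝ)
    (hgreatest : IsGreatest
      {μ : ℝ | ∃ x : Fin d → ℂ, x ≠ 0 ∧ U *ᵥ x = (μ : ℂ) • x} lammax)
    (hzlam : z < lammax)
    (σ : Fin d → ℂ) (hσ_eig : U *ᵥ σ = (lammax : ℂ) • σ) (hσ_norm : star σ ⬝ᵥ σ = 1) :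
    letI ystar : Fin d → ℂ := (Real.sqrt ((lammax - z) / lammax) : ℂ) • σ
    ((star ystar ⬝ᵥ (U *ᵥ ystar)).re + z = lammax) ∧
    ((star ystar ⬝ᵥ ystar).re - Real.log ((star ystar ⬝ᵥ (U *ᵥ ystar)).re + z)
      = (lammax - z) / lammax - Real.log lammax) ∧
    (∀ y : Fin d → ℂ, 0 < (star y ⬝ᵥ (U *ᵥ y)).re + z →
      (star ystar ⬝ᵥ ystar).re - Real.log ((star ystar ⬝ᵥ (U *ᵥ ystar)).re + z)
        ≤ (star y ⬝ᵥ y).re - Real.log ((star y ⬝ᵥ (U *ᵥ y)).re + z)) :=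
  lqpqm_zero_offset_case2_general hU.isHermitian (hz.trans_lt hzlam) hzlam.le hgreatest.2
    hσ_eig hσ_norm
end

section
/- Unique root above the largest pole (Lemma 6, part 4): f is strictly decreasing on the interval (φ_max, ∞), and there exists exactly one λ ∈ (max(φ_max, z), ∞) with f(λ) = 0; this λ is the largest root of f. -/
/-!
Each term `λ² c / (λ - φ)² = c (λ / (λ - φ))²` decreases on `(φ, ∞)`, because
`λ / (λ - φ) = 1 + φ / (λ - φ)`. Hence the sum of these terms decreases on `(φ_max, ∞)`, from `+∞`
at `φ_max` to the finite limit `∑ c`, and subtracting `λ` gives a strictly decreasing bijection of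
`(φ_max, ∞)` onto `ℝ`. Its zero exceeds `z` since the sum is positive.
-/

open Filter Set Topology

lemma div_sub_eq_one_add_div {K : Type*} [DivisionRing K] {x b : K} (hx : x ≠ b) :
    x / (x - b) = 1 + b / (x - b) := by
  rw [← same_add_div (sub_ne_zero.2 hx), sub_add_cancel]

section DivSub

variable {K : Type*} [Field K] [LinearOrder K] [IsStrictOrderedRing K]

lemma antitoneOn_div_sub {b : K} (hb : 0 ≤ b) : AntitoneOn (fun x ↦ x / (x - b)) (Ioi b) := by
  intro x hx y hy hxy
  have hsub : 0 < x - b := sub_pos.2 hx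
  simp only [div_sub_eq_one_add_div (ne_of_gt hx), div_sub_eq_one_add_div (ne_of_gt hy)]
  gcongr

variable [TopologicalSpace K] [OrderTopology K]

lemma tendsto_div_sub_nhdsGT {b : K} (hb : 0 < b) :
    Tendsto (fun x ↦ x / (x - b)) (𝓝[>] b) atTop := by
  have hid : Tendsto (fun x ↦ x) (𝓝[>] b) (𝓝 b) := nhdsWithin_le_nhds
  have hsub : Tendsto (fun x ↦ x - b) (𝓝[>] b) (𝓝[>] 0) := by
    refine tendsto_nhdsWithin_iff.2 ⟨?_, eventually_mem_nhdsWithin.mono fun x ↦ sub_pos.2⟩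
    simpa only [sub_self] using hid.sub_const b
  simpa only [div_eq_mul_inv, Pi.inv_apply] using hid.pos_mul_atTop hb hsub.inv_tendsto_nhdsGT_zero

lemma tendsto_div_sub_atTop (b : K) : Tendsto (fun x ↦ x / (x - b)) atTop (𝓝 1) := by
  have hsub : Tendsto (fun x ↦ x - b) atTop atTop := by
    simpa only [sub_eq_add_neg, id] using tendsto_atTop_add_const_right atTop (-b) tendsto_id
  have hfrac : Tendsto (fun x ↦ 1 + b / (x - b)) atTop (𝓝 1) := by
    simpa only [add_zero] using (hsub.const_div_atTop b).const_add 1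
  exact hfrac.congr' <| (eventually_ne_atTop b).mono fun x hx ↦ (div_sub_eq_one_add_div hx).symm

end DivSub

section SecularFun

variable {ι : Type*} {s : Finset ι} {φ c : ι → ℝ} {a : ℝ} {m₀ : ι}

/-- The rational part `λ² ∑ c_m / (λ - φ_m)²` of the secular function. A summand with `λ = φ_m`
is `0`, by the convention for division by zero. -/
noncomputable def poleSum (s : Finset ι) (φ c : ι → ℝ) (lam : ℝ) : ℝ :=
  lam ^ 2 * ∑ m ∈ s, c m / (lam - φ m) ^ 2

/-- The secular function `f` with poles `φ_m`, weights `c_m` and offset `z`; its values at the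
poles are meaningless. -/
noncomputable def secularFun (s : Finset ι) (φ c : ι → ℝ) (z lam : ℝ) : ℝ :=
  poleSum s φ c lam - lam + z

lemma poleSum_eq_sum_mul_div_sq (s : Finset ι) (φ c : ι → ℝ) (lam : ℝ) :
    poleSum s φ c lam = ∑ m ∈ s, c m * (lam / (lam - φ m)) ^ 2 := by
  simp only [poleSum, Finset.mul_sum, div_pow, mul_div_left_comm]

lemma antitoneOn_poleSum (hφ : ∀ m ∈ s, 0 ≤ φ m) (hc : ∀ m ∈ s, 0 ≤ c m)
    (hφa : ∀ m ∈ s, φ m ≤ a) : AntitoneOn (poleSum s φ c) (Ioi a) := by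
  intro x hx y hy hxy
  simp only [poleSum_eq_sum_mul_div_sq]
  refine Finset.sum_le_sum fun m hm ↦ mul_le_mul_of_nonneg_left ?_ (hc m hm)
  have hxm : φ m < x := (hφa m hm).trans_lt hx
  have hym : φ m < y := (hφa m hm).trans_lt hy
  have hquot_nonneg : 0 ≤ y / (y - φ m) := div_nonneg ((hφ m hm).trans hym.le) (sub_pos.2 hym).le
  exact pow_le_pow_left₀ hquot_nonneg (antitoneOn_div_sub (hφ m hm) hxm hym hxy) 2

lemma continuousOn_poleSum (hφa : ∀ m ∈ s, φ m ≤ a) : ContinuousOn (poleSum s φ c) (Ioi a) := by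
  refine (continuousOn_id.pow 2).mul <| continuousOn_finsetSum s fun m hm ↦
    continuousOn_const.div (by fun_prop) fun x hx ↦ ?_
  exact pow_ne_zero 2 (sub_pos.2 ((hφa m hm).trans_lt hx)).ne'

lemma poleSum_pos {lam : ℝ} (hs : s.Nonempty) (hc : ∀ m ∈ s, 0 < c m) (hlam : lam ≠ 0)
    (hpole : ∀ m ∈ s, lam ≠ φ m) : 0 < poleSum s φ c lam :=
  mul_pos (by positivity) <| Finset.sum_pos
    (fun m hm ↦ div_pos (hc m hm) (sq_pos_of_ne_zero (sub_ne_zero.2 (hpole m hm)))) hs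

lemma tendsto_poleSum_nhdsGT (hm₀ : m₀ ∈ s) (hφ : 0 < φ m₀) (hc : ∀ m ∈ s, 0 ≤ c m)
    (hcm₀ : 0 < c m₀) : Tendsto (poleSum s φ c) (𝓝[>] φ m₀) atTop := by
  have hterm : Tendsto (fun x ↦ c m₀ * (x / (x - φ m₀)) ^ 2) (𝓝[>] φ m₀) atTop :=
    ((tendsto_pow_atTop two_ne_zero).comp (tendsto_div_sub_nhdsGT hφ)).const_mul_atTop hcm₀
  refine tendsto_atTop_mono (fun x ↦ ?_) hterm
  rw [poleSum_eq_sum_mul_div_sq]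
  exact Finset.single_le_sum (f := fun m ↦ c m * (x / (x - φ m)) ^ 2)
    (fun m hm ↦ mul_nonneg (hc m hm) (sq_nonneg _)) hm₀

lemma tendsto_poleSum_atTop (s : Finset ι) (φ c : ι → ℝ) :
    Tendsto (poleSum s φ c) atTop (𝓝 (∑ m ∈ s, c m)) := by
  simp only [funext (poleSum_eq_sum_mul_div_sq s φ c)]
  refine tendsto_finsetSum s fun m _ ↦ ?_
  simpa using ((tendsto_div_sub_atTop (φ m)).pow 2).const_mul (c m)

lemma strictAntiOn_secularFun (hφ : ∀ m ∈ s, 0 ≤ φ m) (hc : ∀ m ∈ s, 0 ≤ c m)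
    (hφa : ∀ m ∈ s, φ m ≤ a) (z : ℝ) : StrictAntiOn (secularFun s φ c z) (Ioi a) := by
  intro x hx y hy hxy
  have hsum := antitoneOn_poleSum hφ hc hφa hx hy hxy.le
  simp only [secularFun]
  linarith

lemma tendsto_secularFun_nhdsGT (hm₀ : m₀ ∈ s) (hφ : 0 < φ m₀) (hc : ∀ m ∈ s, 0 ≤ c m)
    (hcm₀ : 0 < c m₀) (z : ℝ) : Tendsto (secularFun s φ c z) (𝓝[>] φ m₀) atTop := by
  have hlinear : Tendsto (fun x ↦ -x) (𝓝[>] φ m₀) (𝓝 (-φ m₀)) :=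
    tendsto_nhdsWithin_of_tendsto_nhds tendsto_id.neg
  exact tendsto_atTop_add_const_right _ z
    ((tendsto_poleSum_nhdsGT hm₀ hφ hc hcm₀).atTop_add hlinear)

lemma tendsto_secularFun_atTop (s : Finset ι) (φ c : ι → ℝ) (z : ℝ) :
    Tendsto (secularFun s φ c z) atTop atBot :=
  tendsto_atBot_add_const_right _ z
    ((tendsto_poleSum_atTop s φ c).add_atBot tendsto_neg_atTop_atBot)

lemma surjOn_secularFun (hm₀ : m₀ ∈ s) (hmax : ∀ m ∈ s, φ m ≤ φ m₀) (hφ : 0 < φ m₀)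
    (hc : ∀ m ∈ s, 0 ≤ c m) (hcm₀ : 0 < c m₀) (z : ℝ) :
    SurjOn (secularFun s φ c z) (Ioi (φ m₀)) univ := by
  have hcont : ContinuousOn (secularFun s φ c z) (Ioi (φ m₀)) :=
    ((continuousOn_poleSum hmax).sub continuousOn_id).add continuousOn_const
  exact hcont.surjOn_of_tendsto' nonempty_Ioi
    ((tendsto_comp_coe_Ioi_atBot).2 (tendsto_secularFun_nhdsGT hm₀ hφ hc hcm₀ z))
    (tendsto_comp_val_Ioi_atTop.2 (tendsto_secularFun_atTop s φ c z))

lemma lt_of_secularFun_eq_zero {z lam : ℝ} (hs : s.Nonempty) (hc : ∀ m ∈ s, 0 < c m)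
    (hlam : lam ≠ 0) (hpole : ∀ m ∈ s, lam ≠ φ m) (hroot : secularFun s φ c z lam = 0) :
    z < lam := by
  have hpos := poleSum_pos hs hc hlam hpole
  simp only [secularFun] at hroot
  linarith

theorem secular_unique_largest_root_general (hs : s.Nonempty) (hφ : ∀ m ∈ s, 0 < φ m)
    (hc : ∀ m ∈ s, 0 < c m) (z : ℝ) :
    StrictAntiOn (secularFun s φ c z) (Ioi (s.sup' hs φ)) ∧
    (∃! lam, lam ∈ Ioi (max (s.sup' hs φ) z) ∧ secularFun s φ c z lam = 0) ∧
    ∀ lam ∈ Ioi (max (s.sup' hs φ) z), secularFun s φ c z lam = 0 →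
      IsGreatest {μ | (∀ m ∈ s, μ ≠ φ m) ∧ secularFun s φ c z μ = 0} lam := by
  have hmax : ∀ m ∈ s, φ m ≤ s.sup' hs φ := fun m hm ↦ Finset.le_sup' φ hm
  obtain ⟨m₀, hm₀, hsup⟩ := Finset.exists_mem_eq_sup' hs φ
  rw [hsup] at hmax ⊢
  have hφm₀ := hφ m₀ hm₀
  have hc_nonneg : ∀ m ∈ s, 0 ≤ c m := fun m hm ↦ (hc m hm).le
  have hpole : ∀ x, φ m₀ < x → ∀ m ∈ s, x ≠ φ m := fun x hx m hm ↦ ((hmax m hm).trans_lt hx).ne'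
  have hanti := strictAntiOn_secularFun (fun m hm ↦ (hφ m hm).le) hc_nonneg hmax z
  refine ⟨hanti, ?_, fun lam hlam hroot ↦ ?_⟩
  · obtain ⟨lam, hlam, hroot⟩ :=
      surjOn_secularFun hm₀ hmax hφm₀ hc_nonneg (hc m₀ hm₀) z (mem_univ 0)
    have hz : z < lam :=
      lt_of_secularFun_eq_zero hs hc (hφm₀.trans hlam).ne' (hpole lam hlam) hroot
    exact ⟨lam, ⟨max_lt hlam hz, hroot⟩, fun μ ⟨hμ, hμroot⟩ ↦
      hanti.injOn (Ioi_subset_Ioi (le_max_left _ _) hμ) hlam (hμroot.trans hroot.symm)⟩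
  · have hlam_gt : φ m₀ < lam := (le_max_left _ _).trans_lt hlam
    refine ⟨⟨hpole lam hlam_gt, hroot⟩, fun μ ⟨_, hμroot⟩ ↦ le_of_not_gt fun hlt ↦ ?_⟩
    exact (hanti hlam_gt (hlam_gt.trans hlt) hlt).ne (hμroot.trans hroot.symm)

end SecularFun

/-- Unique root of the secular function above the largest pole (Lemma 6, part 4):
`f` is strictly decreasing on `(φ_max, ∞)`, there is exactly one root of `f` in
`(max φ_max z, ∞)`, and this root is the largest (positive, pole-avoiding) root of
`f`. -/
theorem secular_unique_largest_root {ι : Type*} [Fintype ι] [Nonempty ι]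
    (φ c : ι → ℝ) (hφ : ∀ m, 0 < φ m) (hc : ∀ m, 0 < c m)
    (z : ℝ) (hz : 0 ≤ z) :
    letI f : ℝ → ℝ := fun lam => lam ^ 2 * ∑ m, c m / (lam - φ m) ^ 2 - lam + z
    letI φmax : ℝ := Finset.univ.sup' Finset.univ_nonempty φ
    StrictAntiOn f (Set.Ioi φmax) ∧
    (∃! lam : ℝ, lam ∈ Set.Ioi (max φmax z) ∧ f lam = 0) ∧
    (∀ lam : ℝ, lam ∈ Set.Ioi (max φmax z) → f lam = 0 →
      ∀ μ : ℝ, 0 < μ → (∀ m, μ ≠ φ m) → f μ = 0 → μ ≤ lam) := by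
  obtain ⟨hanti, hunique, hgreatest⟩ := secular_unique_largest_root_general
    Finset.univ_nonempty (fun m _ ↦ hφ m) (fun m _ ↦ hc m) z
  exact ⟨hanti, hunique, fun lam hlam hroot μ _ hμ hμroot ↦
    (hgreatest lam hlam hroot).2 ⟨fun m _ ↦ hμ m, hμroot⟩⟩
end
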